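/- Let 1 ≤ k ≤ L be integers, 0 < λ < 1, and let u be a solution of the mean-field ODE system taking values in Ū with initial condition g ∈ U satisfying either g_j ≤ ū_j for all j ≥ 0, or g_j ≥ ū_j for all j ≥ 0. Then for every j ≥ 0, ∫_0^∞ |u_j(t) − ū_j| dt < ∞. -/

import Mathlib

open Finset Set MeasureTheory

/-- The polynomial `f ≡ f^{(L,k)}` from the paper. -/
noncomputable def fLk (L k : ℕ) (x : ℝ) : ℝ :=
  ∑ i ∈ Finset.Icc 1 k,
    (L.choose (L - k + i) : ℝ) * ((L - k + i - 2).choose (i - 1) : ℝ) *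
      (-1 : ℝ) ^ (i - 1) * x ^ (L - k + i)

/-- Membership in `Ū`: real sequences with `1 = u_0 ≥ u_1 ≥ … ≥ 0`. -/
def InUbar (u : ℕ → ℝ) : Prop :=
  u 0 = 1 ∧ (∀ j, u (j + 1) ≤ u j) ∧ (∀ j, 0 ≤ u j)

/-- A `Ū`-valued solution of the mean-field ODE system with initial condition `g`. -/
def IsMFSol (L k : ℕ) (lam : ℝ) (g : ℕ → ℝ) (u : ℝ → ℕ → ℝ) : Prop :=
  (∀ j, u 0 j = g j) ∧
  (∀ t ∈ Set.Ici (0 : ℝ), InUbar (u t)) ∧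
  (∀ j, 1 ≤ j → ∀ t ∈ Set.Ici (0 : ℝ),
    HasDerivWithinAt (fun τ => u τ j)
      (lam * (fLk L k (u t (j - 1)) - fLk L k (u t j)) - k * (u t j - u t (j + 1)))
      (Set.Ici (0 : ℝ)) t)

lemma fLk_eq_self (k : ℕ) (hk : 1 ≤ k) (x : ℝ) : fLk k k x = k * x := by
  unfold fLk
  rw [Finset.sum_eq_single 1]
  · simp
  · intro i hi h1
    have h2 := (Finset.mem_Icc.1 hi).1
    have : (k - k + i - 2).choose (i - 1) = 0 := Nat.choose_eq_zero_of_lt (by omega)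
    rw [this]; simp
  · intro h; exact absurd (Finset.mem_Icc.2 ⟨le_refl _, hk⟩) h

lemma fLk_eq_sum (p k : ℕ) (x : ℝ) : fLk (p + 1 + k) k x =
    ∑ s ∈ Finset.range k, ((p + 1 + k).choose (p + 2 + s) : ℝ) * ((p + s).choose s : ℝ) *
      (-1 : ℝ) ^ s * x ^ (p + 2 + s) := by
  unfold fLk
  symm
  refine Finset.sum_bij (fun s _ => s + 1) ?_ ?_ ?_ ?_
  · intro s hs; simp only [Finset.mem_range] at hs; simp only [Finset.mem_Icc]; omega
  · intro a _ b _ h; simpa using h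
  · intro b hb
    simp only [Finset.mem_Icc] at hb
    exact ⟨b - 1, by simp only [Finset.mem_range]; omega, by omega⟩
  · intro s hs
    have e1 : p + 1 + k - k + (s + 1) = p + 2 + s := by omega
    have e2 : p + 2 + s - 2 = p + s := by omega
    rw [e1, e2]; simp

lemma Gsum (p k : ℕ) : ∑ s ∈ Finset.range (k + 1),
    ((p + 1 + k).choose (p + 1 + s) : ℤ) * ((p + s).choose s : ℤ) * (-1 : ℤ) ^ s = 1 := by
  induction k with
  | zero => simp
  | succ k ih =>
    have h1 : ∀ s, ((p + 1 + (k + 1)).choose (p + 1 + s) : ℤ) * ((p + s).choose s : ℤ) * (-1 : ℤ) ^ s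
      = ((p + 1 + k).choose p : ℤ) * ((-1 : ℤ) ^ s * ((k + 1).choose s : ℤ))
        + ((p + 1 + k).choose (p + 1 + s) : ℤ) * ((p + s).choose s : ℤ) * (-1 : ℤ) ^ s := by
      intro s
      have e1 : (p + 1 + (k + 1)).choose (p + 1 + s)
          = (p + 1 + k).choose (p + s) + (p + 1 + k).choose (p + 1 + s) := by
        have := Nat.choose_succ_succ (p + 1 + k) (p + s)
        rw [show p + 1 + (k + 1) = (p + 1 + k).succ by omega,
          show p + 1 + s = (p + s).succ by omega, this]
      have e2 : (p + 1 + k).choose (p + s) * (p + s).choose s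
          = (p + 1 + k).choose p * (k + 1).choose s := by
        rcases Nat.lt_or_ge (k + 1) s with h | h
        · rw [Nat.choose_eq_zero_of_lt (show p + 1 + k < p + s by omega),
            Nat.choose_eq_zero_of_lt h]; simp
        · have := Nat.choose_mul (n := p + 1 + k) (k := p + s) (s := p)
            (by omega)
          rw [show p + s - p = s by omega, show p + 1 + k - p = k + 1 by omega] at this
          rw [← this, Nat.choose_symm_add]
      have e2' : ((p + 1 + k).choose (p + s) : ℤ) * ((p + s).choose s : ℤ)
          = ((p + 1 + k).choose p : ℤ) * ((k + 1).choose s : ℤ) := by exact_mod_cast e2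
      rw [e1]; push_cast
      linear_combination (-1 : ℤ) ^ s * e2'
    rw [Finset.sum_congr rfl (fun s _ => h1 s), Finset.sum_add_distrib, ← Finset.mul_sum,
      Int.alternating_sum_range_choose_of_ne (by omega), Finset.sum_range_succ, ih,
      Nat.choose_eq_zero_of_lt (show p + 1 + k < p + 1 + (k + 1) by omega)]
    simp

lemma Fsum (p k : ℕ) : ∑ s ∈ Finset.range k,
    ((p + 1 + k).choose (p + 2 + s) : ℤ) * ((p + s).choose s : ℤ) * (-1 : ℤ) ^ s = k := by
  induction k with
  | zero => simp
  | succ k ih =>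
    have h1 : ∀ s, ((p + 1 + (k + 1)).choose (p + 2 + s) : ℤ) * ((p + s).choose s : ℤ) * (-1 : ℤ) ^ s
      = ((p + 1 + k).choose (p + 1 + s) : ℤ) * ((p + s).choose s : ℤ) * (-1 : ℤ) ^ s
        + ((p + 1 + k).choose (p + 2 + s) : ℤ) * ((p + s).choose s : ℤ) * (-1 : ℤ) ^ s := by
      intro s
      have e1 : (p + 1 + (k + 1)).choose (p + 2 + s)
          = (p + 1 + k).choose (p + 1 + s) + (p + 1 + k).choose (p + 2 + s) := by
        have := Nat.choose_succ_succ (p + 1 + k) (p + 1 + s)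
        rw [show p + 1 + (k + 1) = (p + 1 + k).succ by omega,
          show p + 2 + s = (p + 1 + s).succ by omega, this]
      rw [e1]; push_cast; ring
    rw [Finset.sum_congr rfl (fun s _ => h1 s), Finset.sum_add_distrib, Gsum,
      Finset.sum_range_succ, ih,
      Nat.choose_eq_zero_of_lt (show p + 1 + k < p + 2 + k by omega)]
    push_cast; ring

lemma fLk_one (p k : ℕ) : fLk (p + 1 + k) k 1 = k := by
  rw [fLk_eq_sum]
  have := Fsum p k
  have h : ((∑ s ∈ Finset.range k,
    ((p + 1 + k).choose (p + 2 + s) : ℤ) * ((p + s).choose s : ℤ) * (-1 : ℤ) ^ s : ℤ) : ℝ) = k := by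
    rw [this]; simp
  push_cast at h
  simpa using h

lemma second_deriv_sum (p q : ℕ) (x : ℝ) :
    ∑ s ∈ Finset.range (q + 1), ((p + 1 + (q + 1)).choose (p + 2 + s) : ℝ) * ((p + s).choose s : ℝ) *
      (-1 : ℝ) ^ s * ((p + 2 + s : ℝ) * ((p + 1 + s : ℝ) * x ^ (p + s)))
    = ((p + q + 2) * (p + q + 1) * ((p + q).choose p : ℝ)) * x ^ p * (1 - x) ^ q := by
  have hb : (1 - x) ^ q = ∑ s ∈ Finset.range (q + 1), (-x) ^ s * (q.choose s : ℝ) := by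
    rw [sub_eq_neg_add, add_pow]; simp
  rw [hb, Finset.mul_sum]
  refine Finset.sum_congr rfl fun s hs => ?_
  have hs : s ≤ q := by simpa [Nat.lt_succ_iff] using hs
  have e1 := Nat.add_one_mul_choose_eq (p + q + 1) (p + s + 1)
  have e2 := Nat.add_one_mul_choose_eq (p + q) (p + s)
  have e3 : (p + q).choose (p + s) * (p + s).choose s = (p + q).choose p * q.choose s := by
    have := Nat.choose_mul (n := p + q) (k := p + s) (s := p) (by omega)
    rw [show p + s - p = s by omega, show p + q - p = q by omega] at this
    rw [← this, Nat.choose_symm_add]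
  rw [show p + 1 + (q + 1) = p + q + 1 + 1 by omega, show p + 2 + s = p + s + 1 + 1 by omega]
  have e1' : ((p : ℝ) + q + 1 + 1) * ((p + q + 1).choose (p + s + 1) : ℝ)
    = ((p + q + 1 + 1).choose (p + s + 1 + 1) : ℝ) * (p + s + 1 + 1) := by exact_mod_cast e1
  have e2' : ((p : ℝ) + q + 1) * ((p + q).choose (p + s) : ℝ)
    = ((p + q + 1).choose (p + s + 1) : ℝ) * (p + s + 1) := by exact_mod_cast e2
  have e3' : ((p + q).choose (p + s) : ℝ) * ((p + s).choose s : ℝ)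
    = ((p + q).choose p : ℝ) * (q.choose s : ℝ) := by exact_mod_cast e3
  rw [neg_pow x s, pow_add]
  linear_combination (-1 : ℝ) ^ s * x ^ p * x ^ s * (-((p + s).choose s : ℝ) * (p + s + 1) * e1'
    - ((p + s).choose s : ℝ) * (p + q + 2) * e2' + (p + q + 2) * (p + q + 1) * e3')

/-- The analytic facts on `f` used in the proof. -/
lemma fLk_props (L k : ℕ) (hk : 1 ≤ k) (hkL : k ≤ L) : ∃ Λ : ℝ, 0 ≤ Λ ∧
    Continuous (fLk L k) ∧ fLk L k 1 = k ∧
    (∀ x, 0 ≤ x → 0 ≤ fLk L k x ∨ 1 < x) ∧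
    (∀ x y, 0 ≤ x → x ≤ y → y ≤ 1 → fLk L k x ≤ fLk L k y) ∧
    (∀ x y, 0 ≤ x → x ≤ y → y ≤ 1 → fLk L k y - fLk L k x ≤ Λ * (y - x)) ∧
    (∀ x, 0 ≤ x → x ≤ 1 → fLk L k x ≤ k * x) := by
  rcases Nat.eq_or_lt_of_le hkL with rfl | hlt
  · have h : fLk k k = fun x => (k : ℝ) * x := funext (fLk_eq_self k hk)
    have hk0 : (0 : ℝ) ≤ k := by positivity
    rw [h]
    refine ⟨k, hk0, by fun_prop, by simp, fun x hx => Or.inl (by positivity), ?_, ?_, ?_⟩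
    · intro x y _ hxy _; exact mul_le_mul_of_nonneg_left hxy hk0
    · intro x y _ hxy _; exact le_of_eq (by ring)
    · intro x _ _; exact le_refl _
  obtain ⟨p, rfl⟩ : ∃ p, L = p + 1 + k := ⟨L - k - 1, by omega⟩
  obtain ⟨q, rfl⟩ : ∃ q, k = q + 1 := ⟨k - 1, by omega⟩
  set c : ℕ → ℝ := fun s => ((p + 1 + (q + 1)).choose (p + 2 + s) : ℝ) * ((p + s).choose s : ℝ) *
      (-1 : ℝ) ^ s with hc
  have hf : fLk (p + 1 + (q + 1)) (q + 1) = fun x => ∑ s ∈ Finset.range (q + 1), c s * x ^ (p + 2 + s) :=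
    funext (fLk_eq_sum p (q + 1))
  have h1 := fLk_one p (q + 1)
  rw [hf] at h1 ⊢
  set f : ℝ → ℝ := fun x => ∑ s ∈ Finset.range (q + 1), c s * x ^ (p + 2 + s) with hfdef
  set f' : ℝ → ℝ := fun x => ∑ s ∈ Finset.range (q + 1), c s * ((p + 2 + s : ℝ) * x ^ (p + 1 + s))
    with hf'
  set f'' : ℝ → ℝ := fun x => ∑ s ∈ Finset.range (q + 1),
    c s * ((p + 2 + s : ℝ) * ((p + 1 + s : ℝ) * x ^ (p + s))) with hf''
  have d1 : ∀ x, HasDerivAt f (f' x) x := by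
    intro x
    refine HasDerivAt.fun_sum fun s _ => HasDerivAt.const_mul _ ?_
    have := hasDerivAt_pow (p + 2 + s) x
    rw [show p + 2 + s - 1 = p + 1 + s by omega] at this
    push_cast at this
    exact this
  have d2 : ∀ x, HasDerivAt f' (f'' x) x := by
    intro x
    refine HasDerivAt.fun_sum fun s _ => HasDerivAt.const_mul _ (HasDerivAt.const_mul _ ?_)
    have := hasDerivAt_pow (p + 1 + s) x
    rw [show p + 1 + s - 1 = p + s by omega] at this
    push_cast at this
    exact this
  have nn : ∀ x ∈ Icc (0 : ℝ) 1, 0 ≤ f'' x := by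
    intro x hx
    rw [show f'' x = _ from second_deriv_sum p q x]
    have a := hx.1
    have b : 0 ≤ 1 - x := by linarith [hx.2]
    positivity
  have cf : Continuous f := by fun_prop
  have cf' : Continuous f' := by fun_prop
  have f0 : f 0 = 0 := by
    simp only [hfdef]; refine Finset.sum_eq_zero fun s _ => ?_
    rw [zero_pow (by omega)]; simp
  have f'0 : f' 0 = 0 := by
    simp only [hf']; refine Finset.sum_eq_zero fun s _ => ?_
    rw [zero_pow (by omega)]; simp
  have m' : MonotoneOn f' (Icc 0 1) := by
    refine monotoneOn_of_deriv_nonneg (convex_Icc 0 1) cf'.continuousOn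
      (fun x _ => (d2 x).differentiableAt.differentiableWithinAt) ?_
    intro x hx
    rw [(d2 x).deriv]; exact nn x (interior_subset hx)
  have f'nn : ∀ x ∈ Icc (0 : ℝ) 1, 0 ≤ f' x := by
    intro x hx
    rw [← f'0]; exact m' ⟨le_refl _, zero_le_one⟩ hx hx.1
  have f'le : ∀ x ∈ Icc (0 : ℝ) 1, f' x ≤ f' 1 := by
    intro x hx
    exact m' hx ⟨zero_le_one, le_refl _⟩ hx.2
  have m : MonotoneOn f (Icc 0 1) := by
    refine monotoneOn_of_deriv_nonneg (convex_Icc 0 1) cf.continuousOn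
      (fun x _ => (d1 x).differentiableAt.differentiableWithinAt) ?_
    intro x hx
    rw [(d1 x).deriv]; exact f'nn x (interior_subset hx)
  have cvx : ConvexOn ℝ (Icc 0 1) f := by
    refine MonotoneOn.convexOn_of_deriv (convex_Icc 0 1) cf.continuousOn
      (fun x _ => (d1 x).differentiableAt.differentiableWithinAt) ?_
    intro x hx y hy hxy
    rw [(d1 x).deriv, (d1 y).deriv]
    exact m' (interior_subset hx) (interior_subset hy) hxy
  refine ⟨f' 1, f'nn 1 ⟨zero_le_one, le_refl _⟩, cf, h1, ?_, ?_, ?_, ?_⟩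
  · intro x hx
    rcases le_or_gt x 1 with h | h
    · left; rw [← f0]; exact m ⟨le_refl _, zero_le_one⟩ ⟨hx, h⟩ hx
    · right; exact h
  · intro x y hx hxy hy
    exact m ⟨hx, hxy.trans hy⟩ ⟨hx.trans hxy, hy⟩ hxy
  · intro x y hx hxy hy
    refine Convex.image_sub_le_mul_sub_of_deriv_le (convex_Icc 0 1) cf.continuousOn
      (fun x _ => (d1 x).differentiableAt.differentiableWithinAt) ?_ x ⟨hx, hxy.trans hy⟩ y
      ⟨hx.trans hxy, hy⟩ hxy
    intro z hz
    rw [(d1 z).deriv]; exact f'le z (interior_subset hz)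
  · intro x hx hx1
    have h01 : (0 : ℝ) ∈ Icc (0 : ℝ) 1 := ⟨le_refl _, zero_le_one⟩
    have h11 : (1 : ℝ) ∈ Icc (0 : ℝ) 1 := ⟨zero_le_one, le_refl _⟩
    have hsum : (1 - x) + x = 1 := by ring
    have := cvx.2 h01 h11 (sub_nonneg.2 hx1) hx hsum
    simp only [smul_eq_mul, mul_zero, zero_add, mul_one, f0, h1] at this
    linarith

lemma InUbar.le_one {u : ℕ → ℝ} (h : InUbar u) (j : ℕ) : u j ≤ 1 := by
  rw [← h.1]; exact antitone_nat_of_succ_le h.2.1 (Nat.zero_le j)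

lemma eventually_neg_of_deriv_neg {φ : ℝ → ℝ} {φ' t : ℝ} (h : HasDerivWithinAt φ φ' (Ioi t) t)
    (h0 : φ t ≤ 0) (hneg : φ t = 0 → φ' < 0) : ∀ᶠ s in nhdsWithin t (Ioi t), φ s ≤ 0 := by
  rcases lt_or_eq_of_le h0 with hlt | heq
  · have := h.continuousWithinAt
    filter_upwards [this.eventually_lt_const hlt] with s hs using hs.le
  · have h2 := (hasDerivWithinAt_iff_tendsto_slope' (by simp)).1 h
    filter_upwards [h2.eventually_lt_const (hneg heq), self_mem_nhdsWithin] with s hs hst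
    have hst : t < s := hst
    rw [slope_def_field, heq, sub_zero, div_lt_iff₀ (by linarith)] at hs
    linarith

lemma sol_cont {L k : ℕ} {lam : ℝ} {g : ℕ → ℝ} {u : ℝ → ℕ → ℝ} (hu : IsMFSol L k lam g u) (j : ℕ) :
    ContinuousOn (fun t => u t j) (Ici 0) := by
  rcases Nat.eq_zero_or_pos j with rfl | hj
  · have : ContinuousOn (fun _ : ℝ => (1 : ℝ)) (Ici 0) := continuousOn_const
    exact this.congr fun t ht => (hu.2.1 t ht).1
  · exact fun t ht => (hu.2.2 j hj t ht).continuousWithinAt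

lemma comparison {L k : ℕ} (hk : 1 ≤ k) (hkL : k ≤ L) {lam : ℝ} (hlam0 : 0 < lam)
    {g h : ℕ → ℝ} {u v : ℝ → ℕ → ℝ} (hu : IsMFSol L k lam g u) (hv : IsMFSol L k lam h v)
    (hgh : ∀ j, g j ≤ h j) (T : ℝ) (hT : 0 ≤ T) (j : ℕ) : u T j ≤ v T j := by
  obtain ⟨Λ, hΛ, -, -, -, hmono, hlip, -⟩ := fLk_props L k hk hkL
  have ⟨hu0, huU, hud⟩ := hu
  have ⟨hv0, hvU, hvd⟩ := hv
  set K : ℝ := lam * Λ + k + 1 with hK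
  have hKpos : 0 < K := by positivity
  have lipE : ∀ x y E : ℝ, 0 ≤ x → x ≤ 1 → 0 ≤ y → y ≤ 1 → 0 ≤ E → x - y ≤ E →
      fLk L k x - fLk L k y ≤ Λ * E := by
    intro x y E hx hx1 hy hy1 hE hxy
    rcases le_total x y with hle | hle
    · have := hmono x y hx hle hy1
      have := mul_nonneg hΛ hE
      linarith
    · exact (hlip y x hy hle hx1).trans (mul_le_mul_of_nonneg_left hxy hΛ)
  have key : ∀ ε : ℝ, 0 < ε → ∀ t ∈ Icc 0 T, ∀ j, u t j - v t j ≤ ε * (1 + j) * Real.exp (K * t) := by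
    intro ε hε
    have hucont : ∀ j, ContinuousOn (fun t => u t j) (Icc 0 T) :=
      fun j => (sol_cont hu j).mono Icc_subset_Ici_self
    have hvcont : ∀ j, ContinuousOn (fun t => v t j) (Icc 0 T) :=
      fun j => (sol_cont hv j).mono Icc_subset_Ici_self
    set S : Set ℝ := {t | ∀ j, u t j - v t j ≤ ε * (1 + j) * Real.exp (K * t)} with hS
    have hclosed : IsClosed (S ∩ Icc 0 T) := by
      have : S ∩ Icc 0 T = ⋂ j : ℕ, {t ∈ Icc 0 T | u t j - v t j ≤ ε * (1 + j) * Real.exp (K * t)} := by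
        ext t; simp only [hS, mem_inter_iff, mem_ofPred_eq, mem_iInter]
        exact ⟨fun h j => ⟨h.2, h.1 j⟩, fun h => ⟨fun j => (h j).2, (h 0).1⟩⟩
      rw [this]
      refine isClosed_iInter fun j => ?_
      exact isClosed_Icc.isClosed_le ((hucont j).sub (hvcont j)) (by fun_prop)
    have hsub : Icc 0 T ⊆ S := by
      refine hclosed.Icc_subset_of_forall_exists_gt ?_ ?_
      · intro j
        rw [hu0, hv0]
        have := hgh j
        have : 0 ≤ ε * (1 + j) * Real.exp (K * 0) := by positivity
        linarith
      · rintro t ⟨htS, ht0, htT⟩ y hy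
        obtain ⟨n, hn⟩ := exists_nat_gt (1 / ε)
        have hn' : 1 < ε * n := by rw [div_lt_iff₀ hε] at hn; linarith
        have hev : ∀ j ∈ Finset.range n, ∀ᶠ s in nhdsWithin t (Ioi t),
            u s j - v s j - ε * (1 + j) * Real.exp (K * s) ≤ 0 := by
          intro j _
          rcases Nat.eq_zero_or_pos j with rfl | hj
          · filter_upwards [self_mem_nhdsWithin] with s hs
            have hs : t < s := hs
            rw [(huU s (ht0.trans hs.le)).1, (hvU s (ht0.trans hs.le)).1]
            have : 0 ≤ ε * (1 + ((0 : ℕ) : ℝ)) * Real.exp (K * s) := by positivity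
            linarith
          have hIoi : Ioi t ⊆ Ici (0 : ℝ) := fun s hs => ht0.trans (le_of_lt hs)
          have dE : HasDerivWithinAt (fun s => ε * (1 + j) * Real.exp (K * s))
              (ε * (1 + j) * (Real.exp (K * t) * K)) (Ioi t) t := by
            have : HasDerivAt (fun s : ℝ => K * s) K t := by
              simpa using (hasDerivAt_id t).const_mul K
            exact (this.exp.const_mul _).hasDerivWithinAt
          have hd := (((hud j hj t ht0).mono hIoi).sub ((hvd j hj t ht0).mono hIoi)).sub dE
          refine eventually_neg_of_deriv_neg hd ?_ ?_
          · have := htS j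
            change u t j - v t j - ε * (1 + j) * Real.exp (K * t) ≤ 0
            linarith
          · intro heq
            change u t j - v t j - ε * (1 + j) * Real.exp (K * t) = 0 at heq
            have e := Real.exp_pos (K * t)
            set E := Real.exp (K * t)
            have hεE : 0 < ε * E := mul_pos hε e
            obtain ⟨i, rfl⟩ : ∃ i, j = i + 1 := ⟨j - 1, by omega⟩
            simp only [Nat.add_sub_cancel]
            have b1 := lipE (u t i) (v t i) (ε * (1 + i) * E) ((huU t ht0).2.2 _)
              ((huU t ht0).le_one _) ((hvU t ht0).2.2 _) ((hvU t ht0).le_one _) (by positivity) (htS i)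
            have hge : v t (i + 1) ≤ u t (i + 1) := by
              have : 0 ≤ ε * (1 + ((i + 1 : ℕ) : ℝ)) * E := by positivity
              linarith
            have b2 := hmono (v t (i + 1)) (u t (i + 1)) ((hvU t ht0).2.2 _) hge
              ((huU t ht0).le_one _)
            have b3 := htS (i + 1 + 1)
            have c1 := mul_le_mul_of_nonneg_left b1 hlam0.le
            have c2 := mul_le_mul_of_nonneg_left b2 hlam0.le
            have c3 : (k : ℝ) * ((u t (i + 1 + 1) - v t (i + 1 + 1)) - (u t (i + 1) - v t (i + 1)))
                ≤ k * (ε * E) := by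
              refine mul_le_mul_of_nonneg_left ?_ (by positivity)
              push_cast at b3 heq
              nlinarith
            have c4 : lam * (Λ * (ε * (1 + i) * E)) + k * (ε * E)
                < ε * (1 + ((i + 1 : ℕ) : ℝ)) * (E * K) := by
              have : ε * (1 + ((i + 1 : ℕ) : ℝ)) * (E * K) -
                (lam * (Λ * (ε * (1 + i) * E)) + k * (ε * E))
                = (ε * E) * (lam * Λ + k * (1 + i) + (2 + i)) := by
                rw [hK]; push_cast; ring
              have : 0 < (ε * E) * (lam * Λ + k * (1 + i) + (2 + i)) := by positivity
              linarith
            linarith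
        rw [← Filter.eventually_all_finset] at hev
        have hy' : ∀ᶠ s in nhdsWithin t (Ioi t), s ∈ Ioc t y := Ioc_mem_nhdsGT hy
        obtain ⟨s, hs1, hs2⟩ := (hev.and hy').exists
        refine ⟨s, ?_, hs2⟩
        intro j
        rcases Nat.lt_or_ge j n with hj | hj
        · have := hs1 j (Finset.mem_range.2 hj); linarith
        · have hs0 : 0 ≤ s := ht0.trans hs2.1.le
          have a1 := (huU s hs0).le_one j
          have a2 := (hvU s hs0).2.2 j
          have a3 : 1 ≤ Real.exp (K * s) := Real.one_le_exp (by positivity)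
          have a4 : (n : ℝ) ≤ j := by exact_mod_cast hj
          have a5 : 1 ≤ ε * (1 + j) := by nlinarith
          nlinarith
    exact fun t ht => hsub ht
  by_contra hcon
  push Not at hcon
  set D := u T j - v T j
  have hD : 0 < D := sub_pos.2 hcon
  have hM : 0 < (1 + (j : ℝ)) * Real.exp (K * T) := by positivity
  have := key (D / 2 / ((1 + (j : ℝ)) * Real.exp (K * T))) (by positivity) T ⟨hT, le_refl _⟩ j
  rw [mul_assoc, div_mul_cancel₀ _ hM.ne'] at this
  have : D ≤ D / 2 := this
  linarith

lemma tail_deriv {L k : ℕ} {lam : ℝ} {g : ℕ → ℝ} {u : ℝ → ℕ → ℝ} (hu : IsMFSol L k lam g u)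
    (j n : ℕ) (t : ℝ) (ht : t ∈ Ici (0 : ℝ)) :
    HasDerivWithinAt (fun τ => ∑ i ∈ Finset.range n, u τ (j + i + 1))
      (lam * (fLk L k (u t j) - fLk L k (u t (j + n))) - k * (u t (j + 1) - u t (j + n + 1)))
      (Ici 0) t := by
  have h := HasDerivWithinAt.fun_sum (u := Finset.range n) (A := fun i τ => u τ (j + i + 1))
    fun i _ => hu.2.2 (j + i + 1) (by omega) t ht
  refine h.congr_deriv ?_
  induction n with
  | zero => simp
  | succ n ih =>
    rw [Finset.sum_range_succ, ih ?_]
    · simp only [Nat.add_sub_cancel, ← add_assoc]; ring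
    · exact HasDerivWithinAt.fun_sum fun i _ => hu.2.2 (j + i + 1) (by omega) t ht

lemma integ_step {a b S S' : ℝ → ℝ} {κ c σ δ T : ℝ} (hT : 0 ≤ T)
    (ha : ContinuousOn a (Ici 0)) (hb : ContinuousOn b (Ici 0)) (hS' : ContinuousOn S' (Ici 0))
    (hS : ∀ t ∈ Ici (0 : ℝ), HasDerivWithinAt S (S' t) (Ici 0) t)
    (hle : ∀ t ∈ Icc 0 T, κ * a t ≤ c * b t + σ * S' t + δ) :
    κ * ∫ t in (0 : ℝ)..T, a t ≤ c * (∫ t in (0 : ℝ)..T, b t) + σ * (S T - S 0) + δ * T := by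
  have ii : ∀ h : ℝ → ℝ, ContinuousOn h (Ici 0) → IntervalIntegrable h volume 0 T := by
    intro h hh
    refine ContinuousOn.intervalIntegrable ?_
    rw [uIcc_of_le hT]; exact hh.mono Icc_subset_Ici_self
  have ftc : ∫ t in (0 : ℝ)..T, S' t = S T - S 0 := by
    refine intervalIntegral.integral_eq_sub_of_hasDeriv_right_of_le hT
      (fun t ht => ((hS t ht.1).continuousWithinAt).mono Icc_subset_Ici_self) ?_ (ii S' hS')
    intro t ht
    exact (hS t ht.1.le).mono fun s hs => ht.1.le.trans (le_of_lt hs)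
  rw [← ftc]
  have e : c * (∫ t in (0 : ℝ)..T, b t) + σ * (∫ t in (0 : ℝ)..T, S' t) + δ * T
      = ∫ t in (0 : ℝ)..T, (c * b t + σ * S' t + δ) := by
    rw [intervalIntegral.integral_add (((ii b hb).const_mul c).add ((ii S' hS').const_mul σ))
      intervalIntegrable_const,
      intervalIntegral.integral_add ((ii b hb).const_mul c) ((ii S' hS').const_mul σ)]
    simp [mul_comm]
  rw [e, ← intervalIntegral.integral_const_mul]
  refine intervalIntegral.integral_mono_on hT ((ii a ha).const_mul κ) ?_ hle
  exact (((ii b hb).const_mul c).add ((ii S' hS').const_mul σ)).add intervalIntegrable_const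

lemma tail_deriv_cont {L k : ℕ} (hk : 1 ≤ k) (hkL : k ≤ L) {lam : ℝ} {g : ℕ → ℝ} {u : ℝ → ℕ → ℝ}
    (hu : IsMFSol L k lam g u) (j n : ℕ) :
    ContinuousOn (fun t => lam * (fLk L k (u t j) - fLk L k (u t (j + n)))
      - k * (u t (j + 1) - u t (j + n + 1))) (Ici 0) := by
  obtain ⟨-, -, hc, -⟩ := fLk_props L k hk hkL
  have h1 := hc.comp_continuousOn (sol_cont hu j)
  have h2 := hc.comp_continuousOn (sol_cont hu (j + n))
  exact (continuousOn_const.mul (h1.sub h2)).sub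
    (continuousOn_const.mul ((sol_cont hu (j + 1)).sub (sol_cont hu (j + n + 1))))

lemma small_tail {L k : ℕ} (hk : 1 ≤ k) (hkL : k ≤ L) {lam : ℝ} (hlam0 : 0 < lam)
    {g : ℕ → ℝ} (hg : InUbar g) (hgU : Summable (fun i : ℕ => g (i + 1))) {u : ℝ → ℕ → ℝ}
    (hu : IsMFSol L k lam g u) (T δ : ℝ) (hT : 0 ≤ T) (hδ : 0 < δ) :
    ∃ n0 : ℕ, ∀ n ≥ n0, ∀ t ∈ Icc 0 T, u t n ≤ δ := by
  obtain ⟨Λ, hΛ, hc, h1, hnn, hmono, hlip, hlin⟩ := fLk_props L k hk hkL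
  set V := ∑' i : ℕ, g (i + 1)
  set C : ℝ := lam * k + k
  have hC : 0 ≤ C := by positivity
  obtain ⟨n0, hn0⟩ := exists_nat_gt ((V + C * T) / δ)
  refine ⟨n0 + 1, fun n hn t ht => ?_⟩
  have ht0 := ht.1
  have hst := integ_step (a := fun _ => 0) (b := fun _ => 0) (κ := 0) (c := 0) (σ := -1) (δ := C)
    (T := t) ht0 continuousOn_const continuousOn_const (tail_deriv_cont hk hkL hu 0 n)
    (tail_deriv hu 0 n) ?_
  · simp only [zero_mul, zero_add] at hst
    have hS0 : ∑ i ∈ Finset.range n, u 0 (i + 1) ≤ V := by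
      simp only [hu.1]
      exact hgU.sum_le_tsum _ fun i _ => hg.2.2 _
    have hanti := antitone_nat_of_succ_le (hu.2.1 t ht0).2.1
    have hSt : n * u t n ≤ ∑ i ∈ Finset.range n, u t (i + 1) := by
      have := Finset.card_nsmul_le_sum (Finset.range n) (fun i => u t (i + 1)) (u t n) ?_
      · simpa using this
      · intro i hi
        exact hanti (by have := Finset.mem_range.1 hi; omega)
    have hCt : C * t ≤ C * T := mul_le_mul_of_nonneg_left ht.2 hC
    have hn' : (n0 : ℝ) + 1 ≤ n := by exact_mod_cast hn
    rw [div_lt_iff₀ hδ] at hn0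
    have hnpos : (0 : ℝ) < n := by have : (0 : ℝ) ≤ n0 := by positivity
                                   linarith
    have : n * u t n ≤ n * δ := by nlinarith
    exact le_of_mul_le_mul_left this hnpos
  · intro s hs
    have hU := hu.2.1 s hs.1
    have b1 := hmono (u s 0) 1 (hU.2.2 0) (hU.le_one 0) le_rfl
    rw [h1] at b1
    have b2 := (hnn (u s (0 + n)) (hU.2.2 _)).resolve_right (not_lt.2 (hU.le_one _))
    have b3 := hU.2.2 (0 + 1)
    have b4 := hU.le_one (0 + n + 1)
    have c1 : lam * (fLk L k (u s 0) - fLk L k (u s (0 + n))) ≤ lam * k :=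
      mul_le_mul_of_nonneg_left (by linarith) hlam0.le
    have c2 : (k : ℝ) * (u s (0 + n + 1) - u s (0 + 1)) ≤ k * 1 :=
      mul_le_mul_of_nonneg_left (by linarith) (by positivity)
    simp only [C]
    linarith

/-- estimate \eqref{eqn:momIntBound}: for `0 < λ < 1` and a `Ū`-valued
solution `u` with initial condition `g ∈ U` dominated by, or dominating, the fixed point
`ū` coordinatewise, one has `∫_0^∞ |u_j(t) − ū_j| dt < ∞` for every `j`. -/
theorem mfSol_integral_bound (L k : ℕ) (hk : 1 ≤ k) (hkL : k ≤ L)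
    (lam : ℝ) (hlam0 : 0 < lam) (hlam1 : lam < 1)
    (ubar : ℕ → ℝ) (h0 : ubar 0 = 1)
    (hrec : ∀ m : ℕ, ubar (m + 1) = lam / k * fLk L k (ubar m))
    (g : ℕ → ℝ) (hg : InUbar g) (hgU : Summable (fun i : ℕ => g (i + 1)))
    (hcase : (∀ j, g j ≤ ubar j) ∨ (∀ j, ubar j ≤ g j))
    (u : ℝ → ℕ → ℝ) (hu : IsMFSol L k lam g u) :
    ∀ j : ℕ, IntegrableOn (fun t : ℝ => |u t j - ubar j|) (Set.Ioi (0 : ℝ)) := by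
  obtain ⟨Λ, hΛ, hc, h1, hnn, hmono, hlip, hlin⟩ := fLk_props L k hk hkL
  have hk0 : (0 : ℝ) < k := by exact_mod_cast hk
  have hfix : ∀ m, k * ubar (m + 1) = lam * fLk L k (ubar m) := by
    intro m; rw [hrec]; field_simp
  have hub : ∀ m, 0 ≤ ubar m ∧ ubar m ≤ lam ^ m := by
    intro m
    induction m with
    | zero => simp [h0]
    | succ m ih =>
      have hle1 : ubar m ≤ 1 := ih.2.trans (pow_le_one₀ hlam0.le hlam1.le)
      have a := (hnn _ ih.1).resolve_right (not_lt.2 hle1)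
      refine ⟨by rw [hrec]; positivity, ?_⟩
      have b := hlin _ ih.1 hle1
      have c : k * ubar (m + 1) ≤ k * lam ^ (m + 1) := by
        rw [hfix, pow_succ]
        have := mul_le_mul_of_nonneg_left ih.2 hk0.le
        nlinarith
      exact le_of_mul_le_mul_left c hk0
  have hub1 : ∀ m, ubar m ≤ 1 := fun m => (hub m).2.trans (pow_le_one₀ hlam0.le hlam1.le)
  have hubU : InUbar ubar := by
    refine ⟨h0, fun m => ?_, fun m => (hub m).1⟩
    have b := hlin _ (hub m).1 (hub1 m)
    have c : k * ubar (m + 1) ≤ k * ubar m := by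
      rw [hfix]
      have := mul_nonneg hk0.le (hub m).1
      nlinarith
    exact le_of_mul_le_mul_left c hk0
  have hubS : IsMFSol L k lam ubar (fun _ => ubar) := by
    refine ⟨fun _ => rfl, fun _ _ => hubU, fun j hj t _ => ?_⟩
    obtain ⟨i, rfl⟩ : ∃ i, j = i + 1 := ⟨j - 1, by omega⟩
    refine (hasDerivWithinAt_const t _ _).congr_deriv ?_
    have a := hfix i
    have b := hfix (i + 1)
    simp only [Nat.add_sub_cancel]
    linarith
  have hdc : ∀ j, ContinuousOn (fun t => |u t j - ubar j|) (Ici 0) :=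
    fun j => ((sol_cont hu j).sub continuousOn_const).abs
  have main : ∀ j, ∃ C : ℝ, ∀ T : ℝ, 0 ≤ T → ∫ t in (0 : ℝ)..T, |u t j - ubar j| ≤ C := by
    intro j
    induction j with
    | zero =>
      refine ⟨0, fun T hT => le_of_eq ?_⟩
      rw [intervalIntegral.integral_congr (g := fun _ => (0 : ℝ))]
      · simp
      · intro t ht
        rw [uIcc_of_le hT] at ht
        simp [(hu.2.1 t ht.1).1, h0]
    | succ j ih =>
      obtain ⟨C, hC⟩ := ih
      rcases hcase with hcase | hcase
      · have hcmp := fun t ht j => comparison hk hkL hlam0 hu hubS hcase t ht j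
        refine ⟨(lam * Λ * C + (1 - lam)⁻¹ + 1) / k, fun T hT => ?_⟩
        rw [le_div_iff₀' hk0]
        obtain ⟨n, hn⟩ := small_tail hk hkL hlam0 hg hgU hu T (1 / (k * (T + 1))) hT (by positivity)
        have hst := integ_step (κ := k) (c := lam * Λ) (σ := 1) (δ := 1 / (T + 1))
          hT (hdc (j + 1)) (hdc j) (tail_deriv_cont hk hkL hu j n)
          (tail_deriv hu j n) ?_
        · have hCT := mul_le_mul_of_nonneg_left (hC T hT) (mul_nonneg hlam0.le hΛ)
          have hS0 : 0 ≤ ∑ i ∈ Finset.range n, u 0 (j + i + 1) :=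
            Finset.sum_nonneg fun i _ => (hu.2.1 0 self_mem_Ici).2.2 _
          have hST : ∑ i ∈ Finset.range n, u T (j + i + 1) ≤ (1 - lam)⁻¹ := by
            have e1 : ∑ i ∈ Finset.range n, u T (j + i + 1) ≤ ∑ i ∈ Finset.range n, lam ^ i := by
              refine Finset.sum_le_sum fun i _ => ?_
              refine ((hcmp T hT _).trans (hub _).2).trans ?_
              exact pow_le_pow_of_le_one hlam0.le hlam1.le (by omega)
            refine e1.trans ?_
            rw [← tsum_geometric_of_lt_one hlam0.le hlam1]
            exact (summable_geometric_of_lt_one hlam0.le hlam1).sum_le_tsum _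
              fun i _ => by positivity
          have hd : 1 / (T + 1) * T ≤ 1 := by
            rw [one_div_mul_eq_div, div_le_one (by positivity)]; linarith
          linarith
        · intro t ht
          have hU := hu.2.1 t ht.1
          have hδ := hn (j + n) (by omega) t ht
          have b1 := hlip (u t j) (ubar j) (hU.2.2 j) (hcmp t ht.1 j) (hub1 j)
          have b2 := hlin (u t (j + n)) (hU.2.2 _) (hU.le_one _)
          have b3 := hU.2.2 (j + n + 1)
          have b4 := hfix j
          rw [abs_sub_comm, abs_of_nonneg (sub_nonneg.2 (hcmp t ht.1 (j + 1))), abs_sub_comm,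
            abs_of_nonneg (sub_nonneg.2 (hcmp t ht.1 j))]
          have c1 := mul_le_mul_of_nonneg_left b1 hlam0.le
          have c2 : lam * fLk L k (u t (j + n)) ≤ 1 / (T + 1) := by
            have e1 : (k : ℝ) * u t (j + n) ≤ 1 / (T + 1) := by
              have := mul_le_mul_of_nonneg_left hδ hk0.le
              refine this.trans (le_of_eq ?_)
              have : T + 1 ≠ 0 := by positivity
              field_simp
            have e2 := (hnn (u t (j + n)) (hU.2.2 _)).resolve_right (not_lt.2 (hU.le_one _))
            nlinarith
          have c3 := mul_nonneg hk0.le b3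
          linarith
      · have hcmp := fun t ht j => comparison hk hkL hlam0 hubS hu hcase t ht j
        refine ⟨(lam * Λ * C + (∑' i : ℕ, g (i + 1)) + 1) / k, fun T hT => ?_⟩
        rw [le_div_iff₀' hk0]
        obtain ⟨n, hn⟩ := small_tail hk hkL hlam0 hg hgU hu T (1 / (k * (T + 1))) hT (by positivity)
        have hst := integ_step (κ := k) (c := lam * Λ) (σ := -1) (δ := 1 / (T + 1))
          hT (hdc (j + 1)) (hdc j) (tail_deriv_cont hk hkL hu j n)
          (tail_deriv hu j n) ?_
        · have hCT := mul_le_mul_of_nonneg_left (hC T hT) (mul_nonneg hlam0.le hΛ)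
          have hST : 0 ≤ ∑ i ∈ Finset.range n, u T (j + i + 1) :=
            Finset.sum_nonneg fun i _ => (hu.2.1 T hT).2.2 _
          have hS0 : ∑ i ∈ Finset.range n, u 0 (j + i + 1) ≤ ∑' i : ℕ, g (i + 1) := by
            have e1 : ∑ i ∈ Finset.range n, u 0 (j + i + 1) ≤ ∑ i ∈ Finset.range n, g (i + 1) := by
              refine Finset.sum_le_sum fun i _ => ?_
              rw [hu.1]
              exact antitone_nat_of_succ_le hg.2.1 (by omega)
            exact e1.trans (hgU.sum_le_tsum _ fun i _ => hg.2.2 _)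
          have hd : 1 / (T + 1) * T ≤ 1 := by
            rw [one_div_mul_eq_div, div_le_one (by positivity)]; linarith
          linarith
        · intro t ht
          have hU := hu.2.1 t ht.1
          have hδ := hn (j + n + 1) (by omega) t ht
          have b1 := hlip (ubar j) (u t j) (hub j).1 (hcmp t ht.1 j) (hU.le_one j)
          have b2 := (hnn (u t (j + n)) (hU.2.2 _)).resolve_right (not_lt.2 (hU.le_one _))
          have b4 := hfix j
          rw [abs_of_nonneg (sub_nonneg.2 (hcmp t ht.1 (j + 1))),
            abs_of_nonneg (sub_nonneg.2 (hcmp t ht.1 j))]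
          have c1 := mul_le_mul_of_nonneg_left b1 hlam0.le
          have c2 : (k : ℝ) * u t (j + n + 1) ≤ 1 / (T + 1) := by
            have := mul_le_mul_of_nonneg_left hδ hk0.le
            refine this.trans (le_of_eq ?_)
            have : T + 1 ≠ 0 := by positivity
            field_simp
          have c3 := mul_nonneg hlam0.le b2
          linarith
  intro j
  obtain ⟨C, hC⟩ := main j
  refine integrableOn_Ioi_of_intervalIntegral_norm_bounded (ι := ℝ) (l := Filter.atTop)
    (b := id) C 0 ?_ Filter.tendsto_id ?_
  · intro T
    refine (ContinuousOn.integrableOn_Icc ?_).mono_set Ioc_subset_Icc_self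
    exact (hdc j).mono Icc_subset_Ici_self
  · filter_upwards [Filter.eventually_ge_atTop 0] with T hT
    simpa using hC T hT
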